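/- Let Γ ≤ Δ be countable discrete groups and let T ⊆ Δ be a transversal for the left cosets Δ/Γ. For every invariant random subgroup θ of Γ there exists an invariant random subgroup CIND_Γ^Δ(θ) of Δ such that for every finite F ⊆ Δ: CIND_Γ^Δ(θ)(N_F^Δ) = 0 if F ⊄ core_Δ(Γ), and CIND_Γ^Δ(θ)(N_F^Δ) = ∏_{t∈T} θ(N_{t⁻¹Ft}^Γ) if F ⊆ core_Δ(Γ); moreover CIND_Γ^Δ(θ) concentrates on Sub(core_Δ(Γ)), i.e., CIND_Γ^Δ(θ)(Sub(core_Δ(Γ))) = 1, and the measure so defined is independent of the choice of transversal T. -/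

import Mathlib

open MeasureTheory

namespace IRSPaper


/-! ## Basic setup: the space of subgroups, invariant random subgroups -/

/-- The conjugation action of a group on its space of subgroups: `g • H = gHg⁻¹`. -/
def conjSub {G : Type*} [Group G] (g : G) (H : Subgroup G) : Subgroup G :=
  Subgroup.map ((MulAut.conj g).toMonoidHom) H

/-- The topology on the space of subgroups of `G`, induced from the product topology
on `G → Bool` (i.e. the topology of `2^G`). -/
noncomputable instance instTopSub (G : Type*) [Group G] : TopologicalSpace (Subgroup G) :=
  TopologicalSpace.induced
    (fun (H : Subgroup G) (g : G) => @decide (g ∈ H) (Classical.dec _)) inferInstance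

/-- The Borel σ-algebra on the space of subgroups. -/
noncomputable instance instMeasSub (G : Type*) [Group G] : MeasurableSpace (Subgroup G) :=
  borel _

instance instBorelSub (G : Type*) [Group G] : BorelSpace (Subgroup G) := ⟨rfl⟩

/-- An invariant random subgroup: a Borel probability measure on `Sub(G)` which is invariant
under the conjugation action of `G`. -/
def IsIRS {G : Type*} [Group G] (θ : Measure (Subgroup G)) : Prop :=
  IsProbabilityMeasure θ ∧ ∀ g : G, Measure.map (conjSub g) θ = θ

/-- The basic set `N_F = {H ∈ Sub(G) : F ⊆ H}`. -/
def NSet {G : Type*} [Group G] (F : Set G) : Set (Subgroup G) :=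
  {H : Subgroup G | F ⊆ (H : Set G)}

/-- For `Γ ≤ Δ` and `S ⊆ Δ`, the set of subgroups of `Γ` containing every element of `Γ`
whose image in `Δ` lies in `S`.  When `S = t⁻¹Ft ⊆ Γ`, this is exactly the basic set
`N_{t⁻¹Ft}^Γ ⊆ Sub(Γ)`. -/
def NpullSet {Δ : Type*} [Group Δ] (Γ : Subgroup Δ) (S : Set Δ) : Set (Subgroup ↥Γ) :=
  {Λ : Subgroup ↥Γ | ∀ x : ↥Γ, (x : Δ) ∈ S → x ∈ Λ}

/-- `T` is a transversal for the left cosets `Δ/Γ`: each left coset `dΓ` contains exactly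
one element of `T`. -/
def IsLeftTransversal {Δ : Type*} [Group Δ] (Γ : Subgroup Δ) (T : Set Δ) : Prop :=
  ∀ d : Δ, ∃! t : Δ, t ∈ T ∧ d⁻¹ * t ∈ Γ

/-- The defining property of the co-induced invariant random subgroup
`ν = CIND_Γ^Δ(θ)` (with respect to the transversal `T`):  for every finite `F ⊆ Δ`,
`ν(N_F) = 0` if `F ⊄ core_Δ(Γ)` and `ν(N_F) = ∏_{t ∈ T} θ(N_{t⁻¹Ft}^Γ)` if `F ⊆ core_Δ(Γ)`. -/
def CindSpec {Δ : Type*} [Group Δ] (Γ : Subgroup Δ) (T : Set Δ)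
    (θ : Measure (Subgroup ↥Γ)) (ν : Measure (Subgroup Δ)) : Prop :=
  ∀ F : Finset Δ,
    (¬ (F : Set Δ) ⊆ (Γ.normalCore : Set Δ) → ν (NSet (F : Set Δ)) = 0) ∧
    ((F : Set Δ) ⊆ (Γ.normalCore : Set Δ) →
      ν (NSet (F : Set Δ)) =
        ∏' t : T, θ (NpullSet Γ ((fun d => (t : Δ)⁻¹ * d * (t : Δ)) '' (F : Set Δ))))

/-- Ergodicity of a (not necessarily probability-) measure-preserving action given by
an explicit family of maps: every invariant measurable set is null or conull. -/
def ErgodicAct {G α : Type*} [MeasurableSpace α] (act : G → α → α) (μ : Measure α) : Prop :=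
  ∀ s : Set α, MeasurableSet s → (∀ g : G, act g ⁻¹' s = s) → μ s = 0 ∨ μ sᶜ = 0

/-- Weak mixing of an action: the diagonal action on the square is ergodic. -/
def WeaklyMixingAct {G α : Type*} [MeasurableSpace α] (act : G → α → α) (μ : Measure α) : Prop :=
  ErgodicAct (fun (g : G) (p : α × α) => (act g p.1, act g p.2)) (μ.prod μ)

/-- A measure is non-atomic (has no atoms) if every singleton is null. -/
def NonAtomicMeasure {α : Type*} [MeasurableSpace α] (μ : Measure α) : Prop :=
  ∀ x : α, μ {x} = 0

/-- The kernel of an IRS `θ` of `Γ`: the set of `γ ∈ Γ` with `θ(N_γ) = 1`.  (For a probability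
measure this set is a subgroup; taking `Subgroup.closure` makes it a `Subgroup` on the nose.) -/
def kerIRS {Δ : Type*} [Group Δ] (Γ : Subgroup Δ) (θ : Measure (Subgroup ↥Γ)) : Subgroup ↥Γ :=
  Subgroup.closure {x : ↥Γ | θ {Λ : Subgroup ↥Γ | x ∈ Λ} = 1}

/-- `core_Δ(ker(θ))`, viewed as a subgroup of `Δ`. -/
def coreKer {Δ : Type*} [Group Δ] (Γ : Subgroup Δ) (θ : Measure (Subgroup ↥Γ)) : Subgroup Δ :=
  ((kerIRS Γ θ).map Γ.subtype).normalCore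

theorem mem_conjSub {G : Type*} [Group G] (g x : G) (H : Subgroup G) :
    x ∈ conjSub g H ↔ g⁻¹ * x * g ∈ H := by
  unfold conjSub
  rw [Subgroup.mem_map]
  constructor
  · rintro ⟨y, hy, rfl⟩
    simpa [mul_assoc] using hy
  · intro h
    exact ⟨_, h, by simp [mul_assoc]⟩

theorem measSub_eq (G : Type*) [Group G] [Countable G] :
    instMeasSub G = ⨆ g : G, MeasurableSpace.comap
      (fun H : Subgroup G => @decide (g ∈ H) (Classical.dec _)) ⊤ := by
  have h1 : instMeasSub G = MeasurableSpace.comap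
      (fun (H : Subgroup G) (g : G) => @decide (g ∈ H) (Classical.dec _))
      (borel (G → Bool)) := by
    unfold instMeasSub instTopSub
    exact borel_comap
  rw [h1, ← BorelSpace.measurable_eq (α := G → Bool)]
  unfold MeasurableSpace.pi
  rw [MeasurableSpace.comap_iSup]
  simp only [MeasurableSpace.comap_comp]
  rfl

theorem measurableSet_mem {G : Type*} [Group G] [Countable G] (g : G) :
    MeasurableSet {H : Subgroup G | g ∈ H} := by
  have : @MeasurableSet _ (MeasurableSpace.comap
      (fun H : Subgroup G => @decide (g ∈ H) (Classical.dec _)) ⊤) {H : Subgroup G | g ∈ H} :=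
    ⟨{true}, trivial, by ext H; simp⟩
  rw [measSub_eq]
  exact le_iSup (fun g : G => MeasurableSpace.comap
      (fun H : Subgroup G => @decide (g ∈ H) (Classical.dec _)) ⊤) g _ this

theorem measurable_to_sub {G α : Type*} [Group G] [Countable G] [MeasurableSpace α]
    (f : α → Subgroup G) (hf : ∀ g, MeasurableSet {a | g ∈ f a}) : Measurable f := by
  rw [measSub_eq, measurable_iff_comap_le, MeasurableSpace.comap_iSup, iSup_le_iff]
  intro g
  rw [MeasurableSpace.comap_comp, ← measurable_iff_comap_le]
  refine measurable_to_bool ?_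
  convert hf g using 1
  ext a
  simp

theorem measurable_conjSub {G : Type*} [Group G] [Countable G] (g : G) :
    Measurable (conjSub g) := by
  refine measurable_to_sub _ fun x => ?_
  simp only [mem_conjSub]
  exact measurableSet_mem _

theorem measurableSet_NSet {G : Type*} [Group G] [Countable G] (F : Set G) :
    MeasurableSet (NSet F) := by
  have : NSet F = ⋂ g ∈ F, {H : Subgroup G | g ∈ H} := by
    ext H; simp [NSet, Set.subset_def]
  rw [this]
  exact MeasurableSet.biInter F.to_countable fun g _ => measurableSet_mem g

theorem measurableSet_NpullSet {Δ : Type*} [Group Δ] [Countable Δ] (Γ : Subgroup Δ) (S : Set Δ) :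
    MeasurableSet (NpullSet Γ S) :=
  measurableSet_NSet {x : Γ | (x : Δ) ∈ S}

theorem ext_of_NSet {G : Type*} [Group G] [Countable G] (μ ν : Measure (Subgroup G))
    [IsProbabilityMeasure μ] [IsProbabilityMeasure ν]
    (h : ∀ F : Finset G, μ (NSet (F : Set G)) = ν (NSet (F : Set G))) : μ = ν := by
  classical
  refine ext_of_generate_finite (Set.range fun F : Finset G => NSet (F : Set G)) ?_ ?_ ?_ (by simp)
  · apply le_antisymm
    · rw [measSub_eq, iSup_le_iff]
      intro g
      rw [← measurable_iff_comap_le]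
      refine @measurable_to_bool _ (_) _ ?_
      refine MeasurableSpace.measurableSet_generateFrom ⟨{g}, ?_⟩
      ext H
      simp [NSet]
    · refine MeasurableSpace.generateFrom_le ?_
      rintro _ ⟨F, rfl⟩
      exact measurableSet_NSet _
  · rintro _ ⟨F, rfl⟩ _ ⟨F', rfl⟩ _
    refine ⟨F ∪ F', ?_⟩
    ext H
    simp [NSet]
  · rintro _ ⟨F, rfl⟩
    exact h F

/-- The factor at `d`. -/
noncomputable def qfun {Δ : Type*} [Group Δ] (Γ : Subgroup Δ) (θ : Measure (Subgroup ↥Γ))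
    (F : Set Δ) (d : Δ) : ENNReal :=
  θ (NpullSet Γ ((fun x => d⁻¹ * x * d) '' F))

theorem qfun_mul {Δ : Type*} [Group Δ] [Countable Δ] (Γ : Subgroup Δ) (θ : Measure (Subgroup ↥Γ))
    (hθ : IsIRS θ) (F : Set Δ) (d : Δ) (c : Γ) : qfun Γ θ F (d * c) = qfun Γ θ F d := by
  unfold qfun
  conv_lhs => rw [← hθ.2 c⁻¹]
  rw [Measure.map_apply (measurable_conjSub _) (measurableSet_NpullSet _ _)]
  congr 1
  ext L
  simp only [NpullSet, Set.mem_preimage, Set.mem_ofPred_eq, mem_conjSub, Set.mem_image]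
  constructor
  · rintro h x ⟨y, hy, hyx⟩
    have := h (c⁻¹ * x * c) ⟨y, hy, by simp [← hyx, mul_assoc]⟩
    simpa [mul_assoc] using this
  · rintro h x ⟨y, hy, hyx⟩
    refine h _ ⟨y, hy, by simp [← hyx, mul_assoc]⟩

theorem transversal_bij {Δ : Type*} [Group Δ] (Γ : Subgroup Δ) (T : Set Δ)
    (hT : IsLeftTransversal Γ T) :
    Function.Bijective (fun t : T => ((t : Δ) : Δ ⧸ Γ)) := by
  constructor
  · rintro ⟨a, ha⟩ ⟨b, hb⟩ hab
    have h : a⁻¹ * b ∈ Γ := QuotientGroup.eq.1 hab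
    exact Subtype.ext ((hT a).unique ⟨ha, by simp⟩ ⟨hb, h⟩)
  · intro q
    obtain ⟨d, rfl⟩ := QuotientGroup.mk_surjective q
    obtain ⟨t, ⟨ht, h⟩, -⟩ := hT d
    exact ⟨⟨t, ht⟩, (QuotientGroup.eq.2 h).symm⟩

theorem qfun_out {Δ : Type*} [Group Δ] [Countable Δ] (Γ : Subgroup Δ)
    (θ : Measure (Subgroup ↥Γ)) (hθ : IsIRS θ) (F : Set Δ) (d : Δ) :
    qfun Γ θ F ((d : Δ ⧸ Γ).out) = qfun Γ θ F d := by
  obtain ⟨c, hc⟩ := QuotientGroup.mk_out_eq_mul Γ d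
  rw [hc, qfun_mul Γ θ hθ]

theorem tprod_transversal {Δ : Type*} [Group Δ] [Countable Δ] (Γ : Subgroup Δ) (T : Set Δ)
    (hT : IsLeftTransversal Γ T) (θ : Measure (Subgroup ↥Γ)) (hθ : IsIRS θ) (F : Set Δ) :
    ∏' t : T, qfun Γ θ F t = ∏' q : Δ ⧸ Γ, qfun Γ θ F q.out := by
  rw [← (Equiv.ofBijective _ (transversal_bij Γ T hT)).tprod_eq]
  simp only [Equiv.ofBijective_apply, qfun_out Γ θ hθ]

/-- The intersection of the conjugates of the coordinates. -/
def cmap {Δ : Type*} [Group Δ] (Γ : Subgroup Δ) (T : Set Δ) (L : T → Subgroup Γ) : Subgroup Δ :=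
  ⨅ t : T, conjSub (t : Δ) ((L t).map Γ.subtype)

theorem mem_cmap {Δ : Type*} [Group Δ] (Γ : Subgroup Δ) (T : Set Δ) (L : T → Subgroup Γ) (x : Δ) :
    x ∈ cmap Γ T L ↔ ∀ t : T, ∃ h : (t : Δ)⁻¹ * x * t ∈ Γ, (⟨_, h⟩ : Γ) ∈ L t := by
  simp [cmap, Subgroup.mem_iInf, mem_conjSub]

theorem cmap_le {Δ : Type*} [Group Δ] (Γ : Subgroup Δ) (T : Set Δ) (hT : IsLeftTransversal Γ T)
    (L : T → Subgroup Γ) : cmap Γ T L ≤ Γ.normalCore := by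
  intro x hx b
  obtain ⟨t, ⟨ht, h⟩, -⟩ := hT b⁻¹
  obtain ⟨h2, -⟩ := (mem_cmap Γ T L x).1 hx ⟨t, ht⟩
  have := Γ.mul_mem (Γ.mul_mem h h2) (Γ.inv_mem h)
  simpa [mul_assoc] using this

theorem conj_mem_of_core {Δ : Type*} [Group Δ] (Γ : Subgroup Δ) {x : Δ} (hx : x ∈ Γ.normalCore)
    (t : Δ) : t⁻¹ * x * t ∈ Γ := by
  simpa using hx t⁻¹

theorem measurable_cmap {Δ : Type*} [Group Δ] [Countable Δ] (Γ : Subgroup Δ) (T : Set Δ) :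
    Measurable (cmap Γ T) := by
  refine measurable_to_sub _ fun x => ?_
  simp only [mem_cmap, Set.ofPred_forall, Set.ofPred_exists]
  refine MeasurableSet.iInter fun t => MeasurableSet.iUnion fun h => ?_
  have hm : Measurable fun L : T → Subgroup Γ => L t := measurable_pi_apply t
  exact hm (measurableSet_mem (⟨_, h⟩ : Γ))

theorem cind_apply {Δ : Type*} [Group Δ] [Countable Δ] (Γ : Subgroup Δ) (T : Set Δ)
    (θ : Measure (Subgroup ↥Γ)) [IsProbabilityMeasure θ] (F : Set Δ)
    (hF : F ⊆ (Γ.normalCore : Set Δ)) :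
    (Measure.infinitePi (fun _ : T => θ)).map (cmap Γ T) (NSet F) = ∏' t : T, qfun Γ θ F t := by
  rw [Measure.map_apply (measurable_cmap Γ T) (measurableSet_NSet _)]
  unfold qfun
  rw [← Measure.infinitePi_pi_univ (fun _ : T => θ) (fun t => measurableSet_NpullSet _ _)]
  congr 1
  ext L
  simp only [NSet, NpullSet, Set.mem_preimage, Set.mem_ofPred_eq, Set.mem_pi, Set.mem_univ,
    true_imp_iff, Set.subset_def, SetLike.mem_coe, mem_cmap]
  constructor
  · rintro h t x ⟨y, hy, hyx⟩
    obtain ⟨h1, h2⟩ := h y hy t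
    have : x = ⟨_, h1⟩ := Subtype.ext hyx.symm
    rw [this]
    exact h2
  · intro h y hy t
    exact ⟨conj_mem_of_core Γ (hF hy) t, h t _ ⟨y, hy, rfl⟩⟩

/-- **Co-induction of invariant random subgroups** (Theorem 1.1 / Theorem 5.1).
Let `Γ ≤ Δ` be countable groups and `T ⊆ Δ` a transversal for the left cosets `Δ/Γ`.
For every IRS `θ` of `Γ` there is an IRS `ν = CIND_Γ^Δ(θ)` of `Δ` with
`ν(N_F) = 0` if `F ⊄ core_Δ(Γ)` and `ν(N_F) = ∏_{t∈T} θ(N_{t⁻¹Ft}^Γ)` if `F ⊆ core_Δ(Γ)`;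
moreover `ν` concentrates on `Sub(core_Δ(Γ))`, and the same formulas hold for any other
transversal (i.e. `ν` is independent of the choice of transversal). -/
theorem coinduction_of_IRS_exists {Δ : Type*} [Group Δ] [Countable Δ] (Γ : Subgroup Δ)
    (T : Set Δ) (hT : IsLeftTransversal Γ T)
    (θ : Measure (Subgroup ↥Γ)) (hθ : IsIRS θ) :
    ∃ ν : Measure (Subgroup Δ),
      IsIRS ν ∧ CindSpec Γ T θ ν ∧
      ν {H : Subgroup Δ | H ≤ Γ.normalCore} = 1 ∧
      ∀ T' : Set Δ, IsLeftTransversal Γ T' → CindSpec Γ T' θ ν := by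
  classical
  have := hθ.1
  set ν := (Measure.infinitePi (fun _ : T => θ)).map (cmap Γ T) with hν
  have hprob : IsProbabilityMeasure ν :=
    Measure.isProbabilityMeasure_map (measurable_cmap Γ T).aemeasurable
  have hzero : ∀ F : Finset Δ, ¬ (F : Set Δ) ⊆ (Γ.normalCore : Set Δ) →
      ν (NSet (F : Set Δ)) = 0 := by
    intro F hF
    rw [hν, Measure.map_apply (measurable_cmap Γ T) (measurableSet_NSet _)]
    have he : cmap Γ T ⁻¹' NSet (F : Set Δ) = ∅ := by
      ext L
      simp only [Set.mem_preimage, Set.mem_empty_iff_false, iff_false]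
      intro h
      exact hF (h.trans (cmap_le Γ T hT L))
    rw [he, measure_empty]
  have hquot : ∀ F : Finset Δ, (F : Set Δ) ⊆ (Γ.normalCore : Set Δ) →
      ν (NSet (F : Set Δ)) = ∏' q : Δ ⧸ Γ, qfun Γ θ F q.out := by
    intro F hF
    rw [hν, cind_apply Γ T θ F hF, tprod_transversal Γ T hT θ hθ]
  have hspec : ∀ T' : Set Δ, IsLeftTransversal Γ T' → CindSpec Γ T' θ ν := by
    intro T' hT' F
    refine ⟨hzero F, fun hF => ?_⟩
    rw [hquot F hF, ← tprod_transversal Γ T' hT' θ hθ]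
    rfl
  refine ⟨ν, ⟨hprob, fun g => ?_⟩, hspec T hT, ?_, hspec⟩
  · have : IsProbabilityMeasure (ν.map (conjSub g)) :=
      Measure.isProbabilityMeasure_map (measurable_conjSub g).aemeasurable
    refine ext_of_NSet _ _ fun F => ?_
    rw [Measure.map_apply (measurable_conjSub g) (measurableSet_NSet _)]
    have hpre : conjSub g ⁻¹' NSet (F : Set Δ)
        = NSet ((F.image fun x => g⁻¹ * x * g : Finset Δ) : Set Δ) := by
      ext H
      simp [NSet, Set.subset_def, mem_conjSub]
    rw [hpre]
    by_cases hF : (F : Set Δ) ⊆ (Γ.normalCore : Set Δ)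
    · have hF' : ((F.image fun x => g⁻¹ * x * g : Finset Δ) : Set Δ) ⊆ Γ.normalCore := by
        intro y hy
        simp only [Finset.coe_image, Set.mem_image] at hy
        obtain ⟨x, hx, rfl⟩ := hy
        simpa using Γ.normalCore_normal.conj_mem x (hF hx) g⁻¹
      rw [hquot _ hF', hquot _ hF, ← (MulAction.toPerm g : Equiv.Perm (Δ ⧸ Γ)).tprod_eq
        (fun q => qfun Γ θ F q.out)]
      refine tprod_congr fun q => ?_
      obtain ⟨d, rfl⟩ := QuotientGroup.mk_surjective q
      have : (MulAction.toPerm g : Equiv.Perm (Δ ⧸ Γ)) (d : Δ ⧸ Γ) = ((g * d : Δ) : Δ ⧸ Γ) := rfl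
      rw [this, qfun_out Γ θ hθ, qfun_out Γ θ hθ]
      unfold qfun
      rw [Finset.coe_image, Set.image_image]
      simp [mul_assoc]
    · rw [hzero F hF, hzero]
      intro h
      refine hF fun x hx => ?_
      have h1 : g⁻¹ * x * g ∈ Γ.normalCore := h (by
        simp only [Finset.coe_image, Set.mem_image]
        exact ⟨x, hx, rfl⟩)
      have := Γ.normalCore_normal.conj_mem _ h1 g
      simpa [mul_assoc] using this
  · have hm : MeasurableSet {H : Subgroup Δ | H ≤ Γ.normalCore} := by
      have : {H : Subgroup Δ | H ≤ Γ.normalCore}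
          = ⋂ x ∈ ((Γ.normalCore : Set Δ)ᶜ), {H : Subgroup Δ | x ∈ H}ᶜ := by
        ext H
        simp only [Set.mem_ofPred_eq, Set.mem_iInter, Set.mem_compl_iff, SetLike.mem_coe]
        exact ⟨fun h x hx hx' => hx (h hx'), fun h x hx => by_contra fun hn => h x hn hx⟩
      rw [this]
      exact MeasurableSet.biInter (Set.to_countable _) fun x _ => (measurableSet_mem x).compl
    rw [hν, Measure.map_apply (measurable_cmap Γ T) hm]
    convert measure_univ
    · ext L
      simpa using cmap_le Γ T hT L
    · infer_instance

end IRSPaper
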